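/- Magnetic eigenvalue asymptotics at the gap endpoints: under the hypotheses of the preceding gap statement (consecutive levels z₀ < z₁ of Σ_B with s_i := Σ_{n ∈ J(z_i)} sin²(πnb/d) > 0 for i = 0,1), the unique solution ε(α) ∈ (z₀,z₁) of ξ_B(b,z) = α satisfies ε(α) = z₁ − (1/α)·(|B|/(πd))·s₁ + O(α^{−2}) as α → +∞, and ε(α) = z₀ − (1/α)·(|B|/(πd))·s₀ + O(α^{−2}) as α → −∞. -/

import Mathlib

open Real Filter Topology Asymptotics

/-- The digamma function `ψ = Γ'/Γ`. -/
noncomputable def digamma (x : ℝ) : ℝ := deriv Real.Gamma x / Real.Gamma x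

/-- The set of Landau–transverse levels
`Σ_B = {|B|(2m+1) + (πn/d)² : m ∈ ℤ_{≥0}, n ∈ ℤ_{≥1}}` of the free magnetic
Hamiltonian in a Dirichlet layer of width `d`. -/
def landauLevels (B d : ℝ) : Set ℝ :=
  {x | ∃ m n : ℕ, x = |B| * (2 * (m : ℝ) + 1) + (π * ((n : ℝ) + 1) / d) ^ 2}

/-- The `n`-th term (for `n+1`-st transverse mode) of the series defining the
magnetic regularized Green's function:
`t_n = ln((πn)²/(2|B|d²)) − ψ((|B| − z + (πn/d)²)/(2|B|))`. -/
noncomputable def magTerm (B d z : ℝ) (n : ℕ) : ℝ :=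
  Real.log ((π * ((n : ℝ) + 1)) ^ 2 / (2 * |B| * d ^ 2)) -
    digamma ((|B| - z + (π * ((n : ℝ) + 1) / d) ^ 2) / (2 * |B|))

/-- The magnetic regularized Green's function `ξ_B(b,z)` of a point interaction at
height `b ∈ (0,d)` in the Dirichlet layer of width `d` with homogeneous magnetic
field of strength `B`. -/
noncomputable def xiB (B d b z : ℝ) : ℝ :=
  (1 / (2 * π * d)) * ∑' n : ℕ, magTerm B d z n * Real.sin (π * ((n : ℝ) + 1) * b / d) ^ 2
    + (1 / (4 * π * d)) *
      (Real.eulerMascheroniConstant + digamma (b / d) + (π / 2) * Real.cot (π * b / d))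

/-! On a gap `(z₀, z₁)` of the Landau–transverse levels, `ξ_B(b, ·)` differs by a bounded function
from the sum of its two poles at the endpoints. Indeed, the recurrence `ψ(x) = ψ(x + 1) - 1/x`
extracts from each mode a fixed finite number of simple poles, located at the levels. What is left
of the digamma function is compared with the logarithm, while a level `l` outside `[z₀, z₁]` has
`|1/(l - z)| ≤ |1/(l - z₀)| + |1/(l - z₁)|`; both errors are summable over the modes. When `|α|` is
large, a solution of `ξ_B(b, z) = α` is therefore close to an endpoint, whose pole alone is inverted
up to `O(α⁻²)`. -/

section Digamma

lemma digamma_add_one {x : ℝ} (hx : ∀ m : ℕ, x ≠ -m) : digamma (x + 1) = digamma x + 1 / x := by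
  have hx0 : x ≠ 0 := by simpa using hx 0
  have hshift : (fun y ↦ Gamma (y + 1)) =ᶠ[𝓝 x] fun y ↦ y * Gamma y := by
    filter_upwards [isOpen_ne.mem_nhds hx0] with y hy using Gamma_add_one hy
  calc digamma (x + 1) = logDeriv (fun y ↦ Gamma (y + 1)) x := by
        rw [logDeriv_apply, deriv_comp_add_const, digamma]
    _ = logDeriv (fun y ↦ y * Gamma y) x := (logDeriv_congr_nhds hshift).eq_of_nhds
    _ = digamma x + 1 / x := by
        rw [logDeriv_mul (f := fun y ↦ y) x hx0 (Gamma_ne_zero hx) differentiableAt_id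
          (differentiableAt_Gamma hx), logDeriv_id', add_comm, logDeriv_apply, digamma]

lemma digamma_eq_digamma_add_natCast_sub_sum {x : ℝ} (hx : ∀ m : ℕ, x ≠ -m) (N : ℕ) :
    digamma x = digamma (x + N) - ∑ k ∈ Finset.range N, 1 / (x + k) := by
  induction N with
  | zero => simp
  | succ N ih =>
    have hxN : ∀ m : ℕ, x + N ≠ -m := fun m h ↦ hx (m + N) (by push_cast; linarith)
    rw [Finset.sum_range_succ, ih, Nat.cast_succ, ← add_assoc, digamma_add_one hxN]
    ring

lemma ne_neg_natCast_of_pos {x : ℝ} (hx : 0 < x) (m : ℕ) : x ≠ -m :=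
  ((neg_nonpos.2 m.cast_nonneg).trans_lt hx).ne'

lemma hasDerivAt_log_comp_Gamma {x : ℝ} (hx : 0 < x) :
    HasDerivAt (Real.log ∘ Gamma) (digamma x) x :=
  (differentiableAt_Gamma (ne_neg_natCast_of_pos hx)).hasDerivAt.log (Gamma_pos_of_pos hx).ne'

lemma slope_log_comp_Gamma {x : ℝ} (hx : 0 < x) :
    slope (Real.log ∘ Gamma) x (x + 1) = Real.log x := by
  rw [slope_def_field, Function.comp_apply, Function.comp_apply, Gamma_add_one hx.ne',
    Real.log_mul hx.ne' (Gamma_pos_of_pos hx).ne']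
  ring

lemma digamma_le_log {x : ℝ} (hx : 0 < x) : digamma x ≤ Real.log x := by
  rw [← slope_log_comp_Gamma hx]
  exact convexOn_log_Gamma.le_slope_of_hasDerivAt hx (add_pos hx one_pos) (lt_add_one x)
    (hasDerivAt_log_comp_Gamma hx)

lemma log_sub_one_div_le_digamma {x : ℝ} (hx : 0 < x) : Real.log x - 1 / x ≤ digamma x := by
  have hx1 : 0 < x + 1 := add_pos hx one_pos
  have hslope := convexOn_log_Gamma.slope_le_of_hasDerivAt hx hx1 (lt_add_one x)
    (hasDerivAt_log_comp_Gamma hx1)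
  rw [slope_log_comp_Gamma hx, digamma_add_one (ne_neg_natCast_of_pos hx)] at hslope
  linarith

lemma abs_log_sub_digamma_add_le {x h : ℝ} (hx : 0 < x) (hh : 0 ≤ h) :
    |Real.log x - digamma (x + h)| ≤ (h + 1) / x := by
  have hxh : 0 < x + h := by positivity
  have hlog : Real.log x ≤ Real.log (x + h) := Real.log_le_log hx (by linarith)
  have hlog' : Real.log (x + h) ≤ Real.log x + h / x := by
    have := Real.log_le_sub_one_of_pos (div_pos hxh hx)
    rw [Real.log_div hxh.ne' hx.ne', add_div, div_self hx.ne'] at this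
    linarith
  have hinv : 1 / (x + h) ≤ 1 / x := one_div_le_one_div_of_le hx (by linarith)
  have hx' : 0 ≤ 1 / x := by positivity
  rw [abs_le, add_div]
  constructor <;> linarith [digamma_le_log hxh, log_sub_one_div_le_digamma hxh]

end Digamma

section Poles

variable {z₀ z₁ z α M c₀ c₁ : ℝ}

lemma abs_one_div_sub_le_of_notMem_Icc {l : ℝ} (hz : z ∈ Set.Ioo z₀ z₁)
    (hl : l ∉ Set.Icc z₀ z₁) : |1 / (l - z)| ≤ |1 / (l - z₀)| + |1 / (l - z₁)| := by
  obtain ⟨hz₀, hz₁⟩ := hz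
  rcases lt_or_ge l z₀ with h | h
  · refine le_add_of_le_of_nonneg ?_ (abs_nonneg _)
    rw [abs_one_div, abs_one_div, abs_of_neg (by linarith : l - z < 0),
      abs_of_neg (by linarith : l - z₀ < 0)]
    exact one_div_le_one_div_of_le (by linarith) (by linarith)
  · have h' : z₁ < l := not_le.1 fun h' ↦ hl ⟨h, h'⟩
    refine le_add_of_nonneg_of_le (abs_nonneg _) ?_
    rw [abs_one_div, abs_one_div, abs_of_pos (by linarith : 0 < l - z),
      abs_of_pos (by linarith : 0 < l - z₁)]
    exact one_div_le_one_div_of_le (by linarith) (by linarith)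

/- At an endpoint `l` the left-hand side vanishes and one term on the right is `1 / 0 = 0`. -/
lemma abs_one_div_sub_sub_ite_le {l : ℝ} (hz : z ∈ Set.Ioo z₀ z₁) (hl : l ∉ Set.Ioo z₀ z₁) :
    |1 / (l - z) - ((if l = z₀ then 1 else 0) / (z₀ - z) + (if l = z₁ then 1 else 0) / (z₁ - z))|
      ≤ |1 / (l - z₀)| + |1 / (l - z₁)| := by
  have hlt : z₀ < z₁ := hz.1.trans hz.2
  rcases eq_or_ne l z₀ with rfl | h₀
  · simp only [if_true, if_neg hlt.ne, zero_div, add_zero, sub_self, abs_zero]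
    positivity
  rcases eq_or_ne l z₁ with rfl | h₁
  · simp only [if_true, if_neg hlt.ne', zero_div, zero_add, sub_self, abs_zero]
    positivity
  have hl' : l ∉ Set.Icc z₀ z₁ := fun h ↦ hl ⟨h.1.lt_of_ne' h₀, h.2.lt_of_ne h₁⟩
  simpa only [if_neg h₀, if_neg h₁, zero_div, add_zero, sub_zero] using
    abs_one_div_sub_le_of_notMem_Icc hz hl'

lemma abs_sub_sub_div_le_of_abs_sub_div_le {c w K : ℝ} (hα : α ≠ 0) (hK : 2 * K ≤ |α|)
    (h : |α - c / (w - z)| ≤ K) : |z - (w - c / α)| ≤ 2 * |c| * K / α ^ 2 := by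
  have hαpos : 0 < |α| := abs_pos.2 hα
  have hpole : |α| / 2 ≤ |c| / |w - z| := by
    rw [← abs_div]
    linarith [abs_sub_abs_le_abs_sub α (c / (w - z))]
  have hne : w - z ≠ 0 := by
    intro h0
    rw [h0, abs_zero, div_zero] at hpole
    linarith
  have hmul : |α * (w - z)| ≤ 2 * |c| := by
    rw [le_div_iff₀ (abs_pos.2 hne)] at hpole
    rw [abs_mul]
    linarith
  have hid : z - (w - c / α) = -(α * (w - z) * (α - c / (w - z)) / α ^ 2) := by
    field_simp
    ring
  rw [hid, abs_neg, abs_div, abs_mul, abs_of_pos (by positivity : 0 < α ^ 2)]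
  gcongr

lemma abs_sub_right_pole_le (hc₀ : 0 ≤ c₀) (hc₁ : 0 ≤ c₁) (hz : z ∈ Set.Ioo z₀ z₁)
    (h : |α - (c₀ / (z₀ - z) + c₁ / (z₁ - z))| ≤ M) (hα : M + 2 * c₁ / (z₁ - z₀) < α) :
    |α - c₁ / (z₁ - z)| ≤ M + 2 * c₀ / (z₁ - z₀) := by
  obtain ⟨hz₀, hz₁⟩ := hz
  have hlen : 0 < z₁ - z₀ := by linarith
  have hleft : c₀ / (z₀ - z) ≤ 0 := div_nonpos_of_nonneg_of_nonpos hc₀ (by linarith)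
  have hpole : 2 * c₁ / (z₁ - z₀) < c₁ / (z₁ - z) := by linarith [(abs_le.1 h).2]
  have hnear : 2 * (z₁ - z) < z₁ - z₀ := by
    by_contra! hfar
    refine hpole.not_ge ?_
    rw [div_le_div_iff₀ (by linarith) hlen]
    nlinarith
  have hleft' : |c₀ / (z₀ - z)| ≤ 2 * c₀ / (z₁ - z₀) := by
    rw [abs_of_nonpos hleft, ← div_neg, div_le_div_iff₀ (by linarith) hlen]
    nlinarith
  calc |α - c₁ / (z₁ - z)|
      = |(α - (c₀ / (z₀ - z) + c₁ / (z₁ - z))) + c₀ / (z₀ - z)| := by ring_nf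
    _ ≤ M + 2 * c₀ / (z₁ - z₀) := (abs_add_le _ _).trans (add_le_add h hleft')

variable {f ε : ℝ → ℝ}

lemma isBigO_sub_right_of_two_poles (hc₀ : 0 ≤ c₀) (hc₁ : 0 ≤ c₁)
    (hf : ∀ z ∈ Set.Ioo z₀ z₁, |f z - (c₀ / (z₀ - z) + c₁ / (z₁ - z))| ≤ M)
    (hε : ∀ᶠ α in atTop, ε α ∈ Set.Ioo z₀ z₁ ∧ f (ε α) = α) :
    (fun α ↦ ε α - (z₁ - c₁ / α)) =O[atTop] fun α ↦ 1 / α ^ 2 := by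
  refine IsBigO.of_bound (2 * |c₁| * (M + 2 * c₀ / (z₁ - z₀))) ?_
  filter_upwards [hε, eventually_gt_atTop (M + 2 * c₁ / (z₁ - z₀)),
    eventually_ge_atTop (2 * (M + 2 * c₀ / (z₁ - z₀))), eventually_gt_atTop 0]
    with α ⟨hmem, hsol⟩ hpole hlarge hpos
  have hbound := hf _ hmem
  rw [hsol] at hbound
  rw [Real.norm_eq_abs, Real.norm_of_nonneg (by positivity), mul_one_div]
  exact abs_sub_sub_div_le_of_abs_sub_div_le hpos.ne' (hlarge.trans (le_abs_self α))
    (abs_sub_right_pole_le hc₀ hc₁ hmem hbound hpole)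

/- The reflection `z ↦ -z`, `α ↦ -α` exchanges the two endpoints. -/
lemma isBigO_sub_left_of_two_poles (hc₀ : 0 ≤ c₀) (hc₁ : 0 ≤ c₁)
    (hf : ∀ z ∈ Set.Ioo z₀ z₁, |f z - (c₀ / (z₀ - z) + c₁ / (z₁ - z))| ≤ M)
    (hε : ∀ᶠ α in atBot, ε α ∈ Set.Ioo z₀ z₁ ∧ f (ε α) = α) :
    (fun α ↦ ε α - (z₀ - c₀ / α)) =O[atBot] fun α ↦ 1 / α ^ 2 := by
  have hf' : ∀ z ∈ Set.Ioo (-z₁) (-z₀),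
      |-f (-z) - (c₁ / (-z₁ - z) + c₀ / (-z₀ - z))| ≤ M := by
    intro z hz
    have hneg := hf (-z) ⟨by linarith [hz.2], by linarith [hz.1]⟩
    rw [← abs_neg] at hneg
    have h₀ : z₀ - -z = -(-z₀ - z) := by ring
    have h₁ : z₁ - -z = -(-z₁ - z) := by ring
    rw [h₀, h₁, div_neg, div_neg] at hneg
    convert hneg using 2
    ring
  have hε' : ∀ᶠ α in atTop, -ε (-α) ∈ Set.Ioo (-z₁) (-z₀) ∧ -f (- -ε (-α)) = α := by
    filter_upwards [tendsto_neg_atTop_atBot.eventually hε] with α ⟨hmem, hsol⟩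
    exact ⟨⟨neg_lt_neg hmem.2, neg_lt_neg hmem.1⟩, by rw [neg_neg, hsol, neg_neg]⟩
  refine ((isBigO_sub_right_of_two_poles hc₁ hc₀ hf' hε').comp_tendsto
    tendsto_neg_atBot_atTop).neg_left.congr (fun α ↦ ?_) fun α ↦ ?_
  · simp only [Function.comp_apply, neg_neg, div_neg]
    ring
  · simp only [Function.comp_apply, neg_sq]

end Poles

section Series

lemma abs_tsum_sub_le_of_abs_sub_le {ι : Type*} {f p g : ι → ℝ} {P : ℝ} (hp : HasSum p P)
    (hg : Summable g) (h : ∀ n, |f n - p n| ≤ g n) : |∑' n, f n - P| ≤ ∑' n, g n := by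
  have hdiff : Summable fun n ↦ f n - p n := Summable.of_norm_bounded hg h
  have hf : HasSum f (∑' n, (f n - p n) + P) := by simpa using hdiff.hasSum.add hp
  rw [hf.tsum_eq, add_sub_cancel_right]
  exact tsum_of_norm_bounded (f := fun n ↦ f n - p n) hg.hasSum h

lemma hasSum_indicator_one_mul {ι : Type*} {s : Set ι} (hs : s.Finite) (f : ι → ℝ) :
    HasSum (fun n ↦ s.indicator 1 n * f n) (∑' n : s, f n) := by
  have : Finite s := hs
  have hsum : HasSum (f ∘ ((↑) : s → ι)) (∑' n : s, f n) := Summable.of_finite.hasSum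
  convert hasSum_subtype_iff_indicator.1 hsum using 2 with n
  by_cases hn : n ∈ s <;> simp [hn]

lemma summable_one_div_mul_sq_add {c : ℝ} (hc : c ≠ 0) (a : ℝ) :
    Summable fun n : ℕ ↦ 1 / (c * ((n : ℝ) + 1) ^ 2 + a) := by
  have hsq : Tendsto (fun n : ℕ ↦ ((n : ℝ) + 1) ^ 2) atTop atTop :=
    (tendsto_pow_atTop two_ne_zero).comp
      (tendsto_atTop_add_const_right _ 1 tendsto_natCast_atTop_atTop)
  have hequiv : (fun n : ℕ ↦ c * ((n : ℝ) + 1) ^ 2 + a) ~[atTop]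
      fun n : ℕ ↦ c * ((n : ℝ) + 1) ^ 2 :=
    IsEquivalent.refl.add_isLittleO <| (isLittleO_const_left.2 <| .inr <|
      tendsto_norm_atTop_atTop.comp hsq).trans_isBigO (isBigO_self_const_mul hc _ _)
  have hsummable : Summable fun n : ℕ ↦ (c * ((n : ℝ) + 1) ^ 2)⁻¹ := by
    simp only [mul_inv]
    exact_mod_cast ((summable_nat_add_iff 1).2
      (Real.summable_nat_pow_inv.2 one_lt_two)).mul_left c⁻¹
  simp only [one_div]
  exact summable_of_isBigO_nat hsummable hequiv.inv.isBigO

end Series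

section Levels

/-- The transverse eigenvalue `(πn/d)²` of the Dirichlet layer; as in `magTerm`, the index is
shifted so that the mode `n ≥ 1` of the paper is `n - 1` here. -/
noncomputable def transverseEnergy (d : ℝ) (n : ℕ) : ℝ := (π * ((n : ℝ) + 1) / d) ^ 2

/-- The Landau–transverse level with Landau index `m` and transverse mode `n`; these are the
elements of `landauLevels`. -/
noncomputable def landauLevel (B d : ℝ) (m n : ℕ) : ℝ :=
  |B| * (2 * (m : ℝ) + 1) + transverseEnergy d n

/-- The set `J(w)` of transverse modes contributing to the level `w`. -/
def levelModes (B d w : ℝ) : Set ℕ := {n | ∃ m : ℕ, landauLevel B d m n = w}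

/-- The coupling sum `∑_{n ∈ J(w)} sin²(πnb/d)` of the level `w` with a point interaction at
height `b`. -/
noncomputable def couplingSum (B d b w : ℝ) : ℝ :=
  ∑' n : levelModes B d w, Real.sin (π * (((n : ℕ) : ℝ) + 1) * b / d) ^ 2

variable {B d w : ℝ}

lemma couplingSum_nonneg (B d b w : ℝ) : 0 ≤ couplingSum B d b w :=
  tsum_nonneg fun _ ↦ sq_nonneg _

lemma transverseEnergy_eq (d : ℝ) (n : ℕ) :
    transverseEnergy d n = (π / d) ^ 2 * ((n : ℝ) + 1) ^ 2 := by
  rw [transverseEnergy]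
  ring

lemma transverseEnergy_pos (hd : d ≠ 0) (n : ℕ) : 0 < transverseEnergy d n := by
  rw [transverseEnergy]
  positivity

lemma summable_one_div_transverseEnergy_add (hd : d ≠ 0) (a : ℝ) :
    Summable fun n : ℕ ↦ 1 / (transverseEnergy d n + a) := by
  simp only [transverseEnergy_eq]
  exact summable_one_div_mul_sq_add (by positivity) a

lemma summable_one_div_landauLevel_sub (B : ℝ) (hd : d ≠ 0) (m : ℕ) (w : ℝ) :
    Summable fun n : ℕ ↦ 1 / (landauLevel B d m n - w) := by
  refine (summable_one_div_transverseEnergy_add hd (|B| * (2 * m + 1) - w)).congr fun n ↦ ?_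
  rw [landauLevel]
  ring_nf

lemma tendsto_transverseEnergy_atTop (hd : d ≠ 0) : Tendsto (transverseEnergy d) atTop atTop := by
  have hinv := (summable_one_div_transverseEnergy_add hd 0).tendsto_atTop_zero
  simp only [add_zero, one_div] at hinv
  refine (tendsto_inv_nhdsGT_zero.comp (tendsto_nhdsWithin_iff.2
    ⟨hinv, .of_forall fun n ↦ inv_pos.2 (transverseEnergy_pos hd n)⟩)).congr fun n ↦ inv_inv _

lemma finite_levelModes (B : ℝ) (hd : d ≠ 0) (w : ℝ) : (levelModes B d w).Finite := by
  have hlarge : ∀ᶠ n in cofinite, w < transverseEnergy d n :=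
    Nat.cofinite_eq_atTop ▸ (tendsto_transverseEnergy_atTop hd).eventually_gt_atTop w
  refine (eventually_cofinite.1 hlarge).subset ?_
  rintro n ⟨m, rfl⟩
  exact not_lt.2 (le_add_of_nonneg_left (by positivity))

lemma hasSum_indicator_levelModes_mul_sin_sq (B : ℝ) (hd : d ≠ 0) (b w : ℝ) :
    HasSum (fun n : ℕ ↦ (levelModes B d w).indicator 1 n * Real.sin (π * ((n : ℝ) + 1) * b / d) ^ 2)
      (couplingSum B d b w) :=
  hasSum_indicator_one_mul (finite_levelModes B hd w)
    fun n : ℕ ↦ Real.sin (π * ((n : ℝ) + 1) * b / d) ^ 2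

lemma landauLevel_left_injective (hB : B ≠ 0) (d : ℝ) (n : ℕ) :
    Function.Injective fun m ↦ landauLevel B d m n := by
  intro m m' h
  have h' : |B| * (m : ℝ) = |B| * m' := by
    simp only [landauLevel] at h
    linarith
  exact_mod_cast mul_left_cancel₀ (abs_ne_zero.2 hB) h'

lemma sum_range_ite_landauLevel_eq (hB : B ≠ 0) {N : ℕ} (hN : w ≤ 2 * |B| * N) (n : ℕ) :
    ∑ k ∈ Finset.range N, (if landauLevel B d k n = w then (1 : ℝ) else 0)
      = (levelModes B d w).indicator 1 n := by
  by_cases hn : n ∈ levelModes B d w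
  · obtain ⟨m, rfl⟩ := id hn
    have hβ : 0 < |B| := abs_pos.2 hB
    have hmN : m < N := by
      have hlt : 2 * |B| * m < 2 * |B| * N := by
        have : 0 ≤ transverseEnergy d n := sq_nonneg _
        rw [landauLevel] at hN
        linarith
      exact_mod_cast lt_of_mul_lt_mul_left hlt (by positivity)
    simp only [(landauLevel_left_injective hB d n).eq_iff, Finset.sum_ite_eq',
      Finset.mem_range.2 hmN, if_true, Set.indicator_of_mem hn, Pi.one_apply]
  · rw [Set.indicator_of_notMem hn]
    exact Finset.sum_eq_zero fun k _ ↦ if_neg fun hk ↦ hn ⟨k, hk⟩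

end Levels

section GreenFunction

variable {B d z₀ z₁ z : ℝ}

lemma magTerm_eq_log_sub_digamma_add_sum (hB : B ≠ 0) (d : ℝ) {n : ℕ}
    (hz : ∀ m, landauLevel B d m n ≠ z) (N : ℕ) :
    magTerm B d z n = Real.log (transverseEnergy d n / (2 * |B|))
      - digamma (transverseEnergy d n / (2 * |B|) + ((|B| - z) / (2 * |B|) + N))
      + 2 * |B| * ∑ k ∈ Finset.range N, 1 / (landauLevel B d k n - z) := by
  have hβ : |B| ≠ 0 := abs_ne_zero.2 hB
  have harg : ∀ k : ℕ, (|B| - z + transverseEnergy d n) / (2 * |B|) + k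
      = (landauLevel B d k n - z) / (2 * |B|) := by
    intro k
    rw [landauLevel]
    field_simp
    ring
  have hne : ∀ m : ℕ, (|B| - z + transverseEnergy d n) / (2 * |B|) ≠ -m := by
    intro m hm
    rw [eq_neg_iff_add_eq_zero, harg, div_eq_zero_iff, sub_eq_zero] at hm
    exact hm.elim (hz m) (by positivity)
  have hlog : (π * ((n : ℝ) + 1)) ^ 2 / (2 * |B| * d ^ 2)
      = transverseEnergy d n / (2 * |B|) := by
    rw [transverseEnergy]
    ring
  have hshift : (|B| - z + transverseEnergy d n) / (2 * |B|) + N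
      = transverseEnergy d n / (2 * |B|) + ((|B| - z) / (2 * |B|) + N) := by ring
  rw [magTerm, ← transverseEnergy, digamma_eq_digamma_add_natCast_sub_sum hne N, hlog, hshift]
  simp only [harg, one_div_div, Finset.mul_sum, mul_one_div]
  ring

lemma landauLevel_notMem_of_Ioo_inter_eq_empty (hgap : Set.Ioo z₀ z₁ ∩ landauLevels B d = ∅)
    (m n : ℕ) : landauLevel B d m n ∉ Set.Ioo z₀ z₁ :=
  fun h ↦ (hgap ▸ ⟨h, m, n, rfl⟩ : landauLevel B d m n ∈ (∅ : Set ℝ))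

lemma abs_sum_one_div_landauLevel_sub_poles_le (hB : B ≠ 0)
    (hgap : Set.Ioo z₀ z₁ ∩ landauLevels B d = ∅) (hz : z ∈ Set.Ioo z₀ z₁) {N : ℕ}
    (hN : z₁ ≤ 2 * |B| * N) (n : ℕ) :
    |∑ k ∈ Finset.range N, 1 / (landauLevel B d k n - z)
        - ((levelModes B d z₀).indicator 1 n / (z₀ - z)
          + (levelModes B d z₁).indicator 1 n / (z₁ - z))|
      ≤ ∑ k ∈ Finset.range N,
          (|1 / (landauLevel B d k n - z₀)| + |1 / (landauLevel B d k n - z₁)|) := by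
  rw [← sum_range_ite_landauLevel_eq hB ((hz.1.trans hz.2).le.trans hN),
    ← sum_range_ite_landauLevel_eq hB hN, Finset.sum_div, Finset.sum_div,
    ← Finset.sum_add_distrib, ← Finset.sum_sub_distrib]
  exact (Finset.abs_sum_le_sum_abs _ _).trans <| Finset.sum_le_sum fun k _ ↦
    abs_one_div_sub_sub_ite_le hz (landauLevel_notMem_of_Ioo_inter_eq_empty hgap k n)

lemma exists_summable_abs_magTerm_sub_poles_le (hB : B ≠ 0) (hd : d ≠ 0)
    (hgap : Set.Ioo z₀ z₁ ∩ landauLevels B d = ∅) :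
    ∃ g : ℕ → ℝ, Summable g ∧ ∀ z ∈ Set.Ioo z₀ z₁, ∀ n,
      |magTerm B d z n - 2 * |B| * ((levelModes B d z₀).indicator 1 n / (z₀ - z)
        + (levelModes B d z₁).indicator 1 n / (z₁ - z))| ≤ g n := by
  have hβ : 0 < 2 * |B| := by positivity
  obtain ⟨N, hN⟩ := exists_nat_ge (z₁ / (2 * |B|))
  rw [div_le_iff₀' hβ] at hN
  let H : ℝ := (|B| - z₀) / (2 * |B|) + N
  refine ⟨fun n ↦ (H + 1) / (transverseEnergy d n / (2 * |B|)) + 2 * |B| * ∑ k ∈ Finset.range N,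
    (|1 / (landauLevel B d k n - z₀)| + |1 / (landauLevel B d k n - z₁)|), ?_, fun z hz n ↦ ?_⟩
  · refine .add ?_ (.mul_left _ (summable_sum fun k _ ↦ ?_))
    · refine ((summable_one_div_transverseEnergy_add hd 0).mul_left
        ((H + 1) * (2 * |B|))).congr fun n ↦ ?_
      rw [add_zero, mul_one_div, div_div_eq_mul_div]
    · exact (summable_one_div_landauLevel_sub B hd k z₀).abs.add
        (summable_one_div_landauLevel_sub B hd k z₁).abs
  have hne : ∀ m, landauLevel B d m n ≠ z := fun m hm ↦
    landauLevel_notMem_of_Ioo_inter_eq_empty hgap m n (hm ▸ hz)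
  have hE : 0 < transverseEnergy d n / (2 * |B|) := div_pos (transverseEnergy_pos hd n) hβ
  have hshift : 0 ≤ (|B| - z) / (2 * |B|) + N := by
    rw [div_add' _ _ _ hβ.ne']
    exact div_nonneg (by linarith [hz.2, abs_nonneg B]) hβ.le
  rw [magTerm_eq_log_sub_digamma_add_sum hB d hne N, add_sub_assoc, ← mul_sub]
  refine (abs_add_le _ _).trans (add_le_add ((abs_log_sub_digamma_add_le hE hshift).trans ?_) ?_)
  · have := hz.1.le
    simp only [H]
    gcongr
  · rw [abs_mul, abs_of_pos hβ]
    gcongr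
    exact abs_sum_one_div_landauLevel_sub_poles_le hB hgap hz hN n

lemma hasSum_poles_mul_sin_sq (B : ℝ) (hd : d ≠ 0) (b z₀ z₁ z : ℝ) :
    HasSum (fun n : ℕ ↦ 2 * |B| * ((levelModes B d z₀).indicator 1 n / (z₀ - z)
        + (levelModes B d z₁).indicator 1 n / (z₁ - z)) * Real.sin (π * ((n : ℝ) + 1) * b / d) ^ 2)
      (2 * |B| * (couplingSum B d b z₀ / (z₀ - z) + couplingSum B d b z₁ / (z₁ - z))) := by
  simpa only [mul_div_right_comm, ← add_mul, ← mul_assoc] using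
    (((hasSum_indicator_levelModes_mul_sin_sq B hd b z₀).div_const (z₀ - z)).add
      ((hasSum_indicator_levelModes_mul_sin_sq B hd b z₁).div_const (z₁ - z))).mul_left (2 * |B|)

lemma exists_abs_xiB_sub_poles_le (hB : B ≠ 0) (hd : d ≠ 0) (b : ℝ)
    (hgap : Set.Ioo z₀ z₁ ∩ landauLevels B d = ∅) :
    ∃ M, ∀ z ∈ Set.Ioo z₀ z₁, |xiB B d b z -
      (|B| / (π * d) * couplingSum B d b z₀ / (z₀ - z)
        + |B| / (π * d) * couplingSum B d b z₁ / (z₁ - z))| ≤ M := by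
  obtain ⟨g, hg, hbound⟩ := exists_summable_abs_magTerm_sub_poles_le hB hd hgap
  set K := (1 / (4 * π * d)) *
    (Real.eulerMascheroniConstant + digamma (b / d) + (π / 2) * Real.cot (π * b / d)) with hK
  refine ⟨|1 / (2 * π * d)| * ∑' n, g n + |K|, fun z hz ↦ ?_⟩
  set S := ∑' n : ℕ, magTerm B d z n * Real.sin (π * ((n : ℝ) + 1) * b / d) ^ 2 with hS
  set P := couplingSum B d b z₀ / (z₀ - z) + couplingSum B d b z₁ / (z₁ - z) with hP
  have hseries : |S - 2 * |B| * P| ≤ ∑' n, g n := by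
    refine abs_tsum_sub_le_of_abs_sub_le (hasSum_poles_mul_sin_sq B hd b z₀ z₁ z) hg fun n ↦ ?_
    rw [← sub_mul, abs_mul, abs_sq]
    exact (mul_le_of_le_one_right (abs_nonneg _) (Real.sin_sq_le_one _)).trans (hbound z hz n)
  calc |xiB B d b z - (|B| / (π * d) * couplingSum B d b z₀ / (z₀ - z)
        + |B| / (π * d) * couplingSum B d b z₁ / (z₁ - z))|
      = |1 / (2 * π * d) * (S - 2 * |B| * P) + K| := by
        rw [xiB, ← hK, ← hS, hP]
        congr 1
        field_simp
        ring
    _ ≤ |1 / (2 * π * d)| * |S - 2 * |B| * P| + |K| := by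
        rw [← abs_mul]
        exact abs_add_le _ _
    _ ≤ |1 / (2 * π * d)| * ∑' n, g n + |K| := by gcongr

end GreenFunction

theorem xiB_gap_eigenvalue_asymptotics_general {B d z₀ z₁ : ℝ} (b : ℝ) (hB : B ≠ 0) (hd : 0 < d)
    (hgap : Set.Ioo z₀ z₁ ∩ landauLevels B d = ∅) (ε : ℝ → ℝ) :
    ((∀ᶠ α in atTop, ε α ∈ Set.Ioo z₀ z₁ ∧ xiB B d b (ε α) = α) → ∃ C αplus : ℝ, ∀ α, αplus ≤ α →
        |ε α - (z₁ - (1 / α) * (|B| / (π * d)) * couplingSum B d b z₁)| ≤ C / α ^ 2) ∧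
    ((∀ᶠ α in atBot, ε α ∈ Set.Ioo z₀ z₁ ∧ xiB B d b (ε α) = α) → ∃ C αminus : ℝ, ∀ α, α ≤ αminus →
        |ε α - (z₀ - (1 / α) * (|B| / (π * d)) * couplingSum B d b z₀)| ≤ C / α ^ 2) := by
  obtain ⟨M, hM⟩ := exists_abs_xiB_sub_poles_le hB hd.ne' b hgap
  have hcoef : ∀ w, 0 ≤ |B| / (π * d) * couplingSum B d b w := fun w ↦
    mul_nonneg (by positivity) (couplingSum_nonneg B d b w)
  have hunfold : ∀ {C w α : ℝ},
      ‖ε α - (w - |B| / (π * d) * couplingSum B d b w / α)‖ ≤ C * ‖1 / α ^ 2‖ →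
      |ε α - (w - (1 / α) * (|B| / (π * d)) * couplingSum B d b w)| ≤ C / α ^ 2 := by
    intro C w α h
    rwa [Real.norm_eq_abs, Real.norm_of_nonneg (by positivity), mul_one_div,
      ← one_div_mul_eq_div, ← mul_assoc] at h
  refine ⟨fun hε ↦ ?_, fun hε ↦ ?_⟩
  · obtain ⟨C, hC⟩ := (isBigO_sub_right_of_two_poles (hcoef z₀) (hcoef z₁) hM hε).bound
    obtain ⟨αplus, hαplus⟩ := eventually_atTop.1 hC
    exact ⟨C, αplus, fun α hα ↦ hunfold (hαplus α hα)⟩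
  · obtain ⟨C, hC⟩ := (isBigO_sub_left_of_two_poles (hcoef z₀) (hcoef z₁) hM hε).bound
    obtain ⟨αminus, hαminus⟩ := eventually_atBot.1 hC
    exact ⟨C, αminus, fun α hα ↦ hunfold (hαminus α hα)⟩

/-- Magnetic eigenvalue asymptotics at the gap endpoints: if `z₀ < z₁` are
consecutive Landau–transverse levels with positive coupling sums `s₀, s₁`, and
`ε(α)` is the unique solution of `ξ_B(b,z) = α` in the gap `(z₀,z₁)`, then
`ε(α) = z₁ − (1/α)·(|B|/(πd))·s₁ + O(α^{−2})` as `α → +∞` and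
`ε(α) = z₀ − (1/α)·(|B|/(πd))·s₀ + O(α^{−2})` as `α → −∞`. -/
theorem xiB_gap_eigenvalue_asymptotics (B d b z₀ z₁ : ℝ) (hB : B ≠ 0) (hd : 0 < d)
    (hb0 : 0 < b) (hbd : b < d)
    (hz₀ : z₀ ∈ landauLevels B d) (hz₁ : z₁ ∈ landauLevels B d) (hlt : z₀ < z₁)
    (hgap : Set.Ioo z₀ z₁ ∩ landauLevels B d = ∅)
    (s₀ s₁ : ℝ)
    (hs₀def : s₀ = ∑' n : {n : ℕ // ∃ m : ℕ,
        |B| * (2 * (m : ℝ) + 1) + (π * (((n : ℕ) : ℝ) + 1) / d) ^ 2 = z₀},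
      Real.sin (π * (((n : ℕ) : ℝ) + 1) * b / d) ^ 2)
    (hs₁def : s₁ = ∑' n : {n : ℕ // ∃ m : ℕ,
        |B| * (2 * (m : ℝ) + 1) + (π * (((n : ℕ) : ℝ) + 1) / d) ^ 2 = z₁},
      Real.sin (π * (((n : ℕ) : ℝ) + 1) * b / d) ^ 2)
    (hs₀ : 0 < s₀) (hs₁ : 0 < s₁)
    (ε : ℝ → ℝ) (hε : ∀ α : ℝ, ε α ∈ Set.Ioo z₀ z₁ ∧ xiB B d b (ε α) = α) :
    (∃ C αplus : ℝ, ∀ α : ℝ, αplus ≤ α →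
        |ε α - (z₁ - (1 / α) * (|B| / (π * d)) * s₁)| ≤ C / α ^ 2) ∧
    (∃ C αminus : ℝ, ∀ α : ℝ, α ≤ αminus →
        |ε α - (z₀ - (1 / α) * (|B| / (π * d)) * s₀)| ≤ C / α ^ 2) := by
  subst hs₀def hs₁def
  obtain ⟨hplus, hminus⟩ := xiB_gap_eigenvalue_asymptotics_general b hB hd hgap ε
  exact ⟨hplus (.of_forall hε), hminus (.of_forall hε)⟩
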